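/- Let A be an n×n real matrix and B ∈ ℝⁿ (an n×1 matrix) with n ≥ 2, and suppose (A,B) is a controllable pair, i.e., rank[B, AB, …, A^{n−1}B] = n. Fix x₀ ∈ ℝⁿ, set x(k) := A^k x₀, and let x̂ : ℕ → ℝⁿ be any sequence satisfying x̂(k+1) ∈ {Av : v ∈ (x̂(k) + S_0) ∩ (x(k) + A⁻¹(S_{n−2}))} for all k ∈ ℕ (these intersections are nonempty for every pair of points). Then x̂(k) = x(k) for all k ≥ n. -/

import Mathlib

open Matrix

/-- The subspaces `S_k` of the paper: `S_0 = range B` and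
`S_{k+1} = A⁻¹(S_k) + S_0`, where `A⁻¹` denotes the preimage. -/
def ctrlS {F : Type*} [Field F] {n m : ℕ} (A : Matrix (Fin n) (Fin n) F)
    (B : Matrix (Fin n) (Fin m) F) : ℕ → Submodule F (Fin n → F)
  | 0 => LinearMap.range B.mulVecLin
  | k + 1 => Submodule.comap A.mulVecLin (ctrlS A B k) ⊔ LinearMap.range B.mulVecLin

/-!
The tracking error `e k = x̂ k - x k` satisfies `e (k + 1) ∈ A ((e k + S_0) ∩ A⁻¹ S_{n-2})`.
Controllability with a scalar input forces `S_0 ∩ A⁻¹ S_{n-2} = 0`: if `s = c b` and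
`A s ∈ S_{n-2}`, applying `A^{n-2}` puts `c A^{n-1} b` in the span of `b, …, A^{n-2} b`, so `c = 0`.
Hence if `e k ∈ S_{j+1}` with `j ≤ n - 2`, the element of `S_0` added by the tracker is exactly
the one cancelling the `S_0`-part of `e k`, and `e (k + 1) ∈ S_j`. The error thus descends through
`S_{n-2}, …, S_0` and then vanishes.
-/

section Tracking

variable {F : Type*} [Field F] {n m r : ℕ} {A : Matrix (Fin n) (Fin n) F}
  {B : Matrix (Fin n) (Fin m) F}

lemma ctrlS_monotone : Monotone (ctrlS A B) := by
  refine monotone_nat_of_le_succ fun k => ?_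
  induction k with
  | zero => exact le_sup_right
  | succ k ih => exact sup_le_sup_right (Submodule.comap_mono ih) _

variable (A B) in
/-- The column `A ^ j * b_i` of the infinite controllability matrix `[B, AB, A²B, …]`, indexed by
the pair `(j, i)`. -/
def ctrlCol (p : ℕ × Fin m) : Fin n → F := (A ^ p.1 * B).col p.2

lemma pow_mul_mulVec_mem_span_ctrlCol {k : ℕ} {s : Set (ℕ × Fin m)} (hs : ∀ i, (k, i) ∈ s)
    (u : Fin m → F) : (A ^ k * B) *ᵥ u ∈ Submodule.span F (ctrlCol A B '' s) := by
  have hrange : (A ^ k * B) *ᵥ u ∈ Submodule.span F (Set.range (A ^ k * B).col) :=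
    range_mulVecLin (A ^ k * B) ▸ LinearMap.mem_range_self _ u
  refine Submodule.span_mono ?_ hrange
  rintro _ ⟨i, rfl⟩
  exact ⟨(k, i), hs i, rfl⟩

lemma pow_mulVec_mem_span_ctrlCol {k : ℕ} {v : Fin n → F} (hv : v ∈ ctrlS A B k) :
    A ^ k *ᵥ v ∈ Submodule.span F (ctrlCol A B '' {p | p.1 ≤ k}) := by
  have input_mem (k : ℕ) (u : Fin m → F) :
      A ^ k *ᵥ B *ᵥ u ∈ Submodule.span F (ctrlCol A B '' {p | p.1 ≤ k}) := by
    rw [mulVec_mulVec]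
    exact pow_mul_mulVec_mem_span_ctrlCol (fun _ => k.le_refl) u
  induction k generalizing v with
  | zero =>
    obtain ⟨u, rfl⟩ := hv
    exact input_mem 0 u
  | succ k ih =>
    obtain ⟨w, hw, _, ⟨u, rfl⟩, rfl⟩ := Submodule.mem_sup.1 hv
    have hAw : A ^ (k + 1) *ᵥ w ∈ Submodule.span F (ctrlCol A B '' {p | p.1 ≤ k}) := by
      rw [pow_succ, ← mulVec_mulVec]
      exact ih hw
    have levels_subset : {p : ℕ × Fin m | p.1 ≤ k} ⊆ {p | p.1 ≤ k + 1} :=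
      fun _ => Nat.le_succ_of_le
    rw [mulVec_add]
    exact add_mem (Submodule.span_mono (Set.image_mono levels_subset) hAw) (input_mem (k + 1) u)

lemma disjoint_ctrlS_zero_comap_ctrlS (h : LinearIndepOn F (ctrlCol A B) {p | p.1 ≤ r + 1}) :
    Disjoint (ctrlS A B 0) ((ctrlS A B r).comap A.mulVecLin) := by
  rw [Submodule.disjoint_def]
  rintro _ ⟨u, rfl⟩ hu
  have mem_span_le :
      (A ^ (r + 1) * B) *ᵥ u ∈ Submodule.span F (ctrlCol A B '' {p | p.1 ≤ r}) := by
    rw [← mulVec_mulVec, pow_succ, ← mulVec_mulVec]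
    exact pow_mulVec_mem_span_ctrlCol hu
  have levels_eq : {p : ℕ × Fin m | p.1 ≤ r + 1} = {p | p.1 = r + 1} ∪ {p | p.1 ≤ r} := by
    ext p
    exact Nat.le_succ_iff.trans or_comm
  have levels_disjoint : Disjoint {p : ℕ × Fin m | p.1 = r + 1} {p | p.1 ≤ r} :=
    Set.disjoint_left.2 fun p hp hp' => (hp.symm.trans_le hp').not_gt r.lt_succ_self
  rw [levels_eq, linearIndepOn_union_iff levels_disjoint] at h
  obtain ⟨hlast, -, hspans⟩ := h
  have image_eq_zero : (A ^ (r + 1) * B) *ᵥ u = 0 :=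
    Submodule.disjoint_def.1 hspans _ (pow_mul_mulVec_mem_span_ctrlCol (fun _ => rfl) u) mem_span_le
  have last_injective : Function.Injective (A ^ (r + 1) * B).mulVec :=
    mulVec_injective_iff.2 <| hlast.comp
      (fun i => (⟨(r + 1, i), rfl⟩ : {p : ℕ × Fin m | p.1 = r + 1})) fun i j hij => by
        simpa using hij
  rw [last_injective (image_eq_zero.trans (mulVec_zero _).symm), map_zero]

variable (A B) in
/-- One step `e' ∈ A ((e + S_0) ∩ A⁻¹ S_r)` of the error between the tracker and the tracked
trajectory, with the condition of the preimage rewritten as `e' ∈ S_r`. -/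
def IsErrorStep (r : ℕ) (e e' : Fin n → F) : Prop :=
  e' ∈ ctrlS A B r ∧ ∃ s ∈ ctrlS A B 0, e' = A *ᵥ (e + s)

lemma isErrorStep_sub {x y v : Fin n → F} (hy : ∃ s ∈ ctrlS A B 0, v = y + s)
    (hx : ∃ z, A *ᵥ z ∈ ctrlS A B r ∧ v = x + z) :
    IsErrorStep A B r (y - x) (A *ᵥ v - A *ᵥ x) := by
  obtain ⟨s, hs, hv⟩ := hy
  obtain ⟨z, hz, rfl⟩ := hx
  rw [← mulVec_sub, add_sub_cancel_left]
  refine ⟨hz, s, hs, congrArg _ ?_⟩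
  rw [sub_add_eq_add_sub, ← hv, add_sub_cancel_left]

namespace IsErrorStep

variable {e e' : Fin n → F}

lemma mem_map (hdisj : Disjoint (ctrlS A B 0) ((ctrlS A B r).comap A.mulVecLin))
    {W : Submodule F (Fin n → F)} (hW : W ≤ (ctrlS A B r).comap A.mulVecLin)
    (h : IsErrorStep A B r e e') (he : e ∈ W ⊔ ctrlS A B 0) : e' ∈ W.map A.mulVecLin := by
  obtain ⟨he', s, hs, rfl⟩ := h
  obtain ⟨w, hw, t, ht, rfl⟩ := Submodule.mem_sup.1 he
  rw [add_assoc] at he' ⊢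
  have hts : t + s ∈ (ctrlS A B r).comap A.mulVecLin :=
    (Submodule.add_mem_iff_right _ (hW hw)).1 he'
  have cancel : t + s = 0 := Submodule.disjoint_def.1 hdisj _ (add_mem ht hs) hts
  rw [cancel, add_zero]
  exact Submodule.mem_map_of_mem hw

lemma eq_zero_of_mem (hdisj : Disjoint (ctrlS A B 0) ((ctrlS A B r).comap A.mulVecLin))
    (h : IsErrorStep A B r e e') (he : e ∈ ctrlS A B 0) : e' = 0 := by
  have := h.mem_map hdisj bot_le (Submodule.mem_sup_right he)
  rwa [Submodule.map_bot, Submodule.mem_bot] at this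

lemma mem_of_mem_succ (hdisj : Disjoint (ctrlS A B 0) ((ctrlS A B r).comap A.mulVecLin))
    {j : ℕ} (hj : j ≤ r) (h : IsErrorStep A B r e e') (he : e ∈ ctrlS A B (j + 1)) :
    e' ∈ ctrlS A B j :=
  Submodule.map_comap_le _ _ <|
    h.mem_map hdisj (Submodule.comap_mono (ctrlS_monotone hj)) he

end IsErrorStep

lemma eq_zero_of_isErrorStep_of_mem
    (hdisj : Disjoint (ctrlS A B 0) ((ctrlS A B r).comap A.mulVecLin))
    {e : ℕ → Fin n → F} (hstep : ∀ k, IsErrorStep A B r (e k) (e (k + 1))) {j k : ℕ}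
    (hj : j ≤ r + 1) (he : e k ∈ ctrlS A B j) : e (k + j + 1) = 0 := by
  induction j generalizing k with
  | zero => exact (hstep k).eq_zero_of_mem hdisj he
  | succ j ih =>
    rw [← add_assoc, add_right_comm k j 1]
    exact ih (by lia) ((hstep k).mem_of_mem_succ hdisj (by lia) he)

theorem eq_zero_of_isErrorStep (hdisj : Disjoint (ctrlS A B 0) ((ctrlS A B r).comap A.mulVecLin))
    {e : ℕ → Fin n → F} (hstep : ∀ k, IsErrorStep A B r (e k) (e (k + 1))) {k : ℕ}
    (hk : r + 2 ≤ k) : e k = 0 := by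
  obtain ⟨k, rfl⟩ := Nat.exists_eq_add_of_le' hk
  have := eq_zero_of_isErrorStep_of_mem hdisj hstep r.le_succ (hstep k).1
  rwa [show k + 1 + r + 1 = k + (r + 2) by lia] at this

end Tracking

lemma linearIndepOn_ctrlCol_of_rank_eq {F : Type*} [Field F] {n N : ℕ}
    {A : Matrix (Fin n) (Fin n) F} {B : Matrix (Fin n) (Fin 1) F}
    (hrank : (Matrix.of fun (i : Fin n) (j : Fin N) => (A ^ (j : ℕ) * B) i 0).rank = N) :
    LinearIndepOn F (ctrlCol A B) {p | p.1 < N} := by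
  have columns_independent : LinearIndependent F fun j : Fin N => ctrlCol A B (j, 0) := by
    rw [linearIndependent_iff_card_eq_finrank_span, Fintype.card_fin]
    exact hrank.symm.trans (rank_eq_finrank_span_cols _)
  have index_injective : Function.Injective fun j : Fin N => ((j : ℕ), (0 : Fin 1)) :=
    fun i j hij => Fin.ext (congrArg Prod.fst hij)
  have range_index : Set.range (fun j : Fin N => ((j : ℕ), (0 : Fin 1))) = {p | p.1 < N} := by
    ext ⟨j, i⟩
    simp [Subsingleton.elim i 0, Fin.exists_iff]
  rw [← range_index]
  exact (linearIndepOn_range_iff index_injective (ctrlCol A B)).2 columns_independent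

theorem stmt_17_general {F : Type*} [Field F] {n : ℕ} (hn : 2 ≤ n)
    (A : Matrix (Fin n) (Fin n) F) (B : Matrix (Fin n) (Fin 1) F)
    (hctrb : (Matrix.of fun (i : Fin n) (j : Fin n) => ((A ^ (j : ℕ)) * B) i 0).rank = n)
    (x₀ : Fin n → F) (xhat : ℕ → Fin n → F)
    (hxhat : ∀ k : ℕ, ∃ v : Fin n → F,
      (∃ s ∈ ctrlS A B 0, v = xhat k + s) ∧
      (∃ z : Fin n → F, A.mulVec z ∈ ctrlS A B (n - 2) ∧ v = (A ^ k).mulVec x₀ + z) ∧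
      xhat (k + 1) = A.mulVec v) :
    ∀ k : ℕ, n ≤ k → xhat k = (A ^ k).mulVec x₀ := by
  have hdisj : Disjoint (ctrlS A B 0) ((ctrlS A B (n - 2)).comap A.mulVecLin) :=
    disjoint_ctrlS_zero_comap_ctrlS <|
      (linearIndepOn_ctrlCol_of_rank_eq hctrb).mono fun p (hp : p.1 ≤ n - 2 + 1) =>
        show p.1 < n by lia
  have hstep (k : ℕ) : IsErrorStep A B (n - 2) (xhat k - A ^ k *ᵥ x₀)
      (xhat (k + 1) - A ^ (k + 1) *ᵥ x₀) := by
    obtain ⟨v, hv, hv', hxv⟩ := hxhat k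
    rw [hxv, pow_succ', ← mulVec_mulVec]
    exact isErrorStep_sub hv hv'
  exact fun k hk => sub_eq_zero.1 <|
    eq_zero_of_isErrorStep (e := fun k => xhat k - A ^ k *ᵥ x₀) hdisj hstep (by lia)

/-- Deadbeat tracking (Corollary 1): if `(A,B)` is a controllable pair with scalar
input, any solution `x̂` of the tracker
`x̂⁺ ∈ A((x̂ + S_0) ∩ (x + A⁻¹(S_{n-2})))` tracking `x(k) = Aᵏx₀` satisfies
`x̂(k) = x(k)` for all `k ≥ n`. -/
theorem stmt_17 {n : ℕ} (hn : 2 ≤ n) (A : Matrix (Fin n) (Fin n) ℝ)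
    (B : Matrix (Fin n) (Fin 1) ℝ)
    (hctrb : (Matrix.of fun (i : Fin n) (j : Fin n) => ((A ^ (j : ℕ)) * B) i 0).rank = n)
    (x₀ : Fin n → ℝ) (xhat : ℕ → Fin n → ℝ)
    (hxhat : ∀ k : ℕ, ∃ v : Fin n → ℝ,
      (∃ s ∈ ctrlS A B 0, v = xhat k + s) ∧
      (∃ z : Fin n → ℝ, A.mulVec z ∈ ctrlS A B (n - 2) ∧ v = (A ^ k).mulVec x₀ + z) ∧
      xhat (k + 1) = A.mulVec v) :
    ∀ k : ℕ, n ≤ k → xhat k = (A ^ k).mulVec x₀ :=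
  stmt_17_general hn A B hctrb x₀ xhat hxhat
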